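/- Let F be a field and let A, B be finite nonempty subsets of F with |A| ≥ 3. Define P = {x ∈ AB : r_{AB}(x) ≥ |A||B|/(log|A|·|AB|)} and A' = {a ∈ A : #{b ∈ B : ab ∈ P} ≥ (2/3)|B|}. Then |A'| ≥ (1 − 3/log|A|)·|A|. -/

import Mathlib

/-!
The proof double-counts the pairs `(a, b) ∈ A × B` whose product is unpopular, i.e. lies outside
`P`. Grouped by the value of the product, there are at most `|AB|` unpopular values, each
represented at most `|A||B| / (log|A| |AB|)` times, so there are at most `|A||B| / log|A|` such
pairs (`card_unpopular_le`). Grouped by the first coordinate, each `a ∈ A \ A'` contributes at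
least `|B| / 3` of them (`card_compl_mul_le`). Hence `|A \ A'| ≤ 3|A| / log|A|`.
-/

open Finset Pointwise
open scoped Classical

/-- The representation function `r_{XY}(t) = #{(x,y) ∈ X×Y : xy = t}`. -/
def prodRep {F : Type*} [Field F] [DecidableEq F] (X Y : Finset F) (t : F) : ℕ :=
  ((X ×ˢ Y).filter fun p => p.1 * p.2 = t).card

/-- The popular product set `P = {x ∈ AB : r_{AB}(x) ≥ |A||B|/(log|A|·|AB|)}`. -/
noncomputable def popularP {F : Type*} [Field F] [DecidableEq F] (A B : Finset F) : Finset F :=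
  (A * B).filter fun x =>
    (A.card : ℝ) * B.card / (Real.log A.card * (A * B).card) ≤ (prodRep A B x : ℝ)

/-- The popular subset `A' = {a ∈ A : #{b ∈ B : ab ∈ P} ≥ (2/3)|B|}`. -/
noncomputable def popularSub {F : Type*} [Field F] [DecidableEq F] (A B : Finset F) : Finset F :=
  A.filter fun a =>
    (2 : ℝ) / 3 * B.card ≤ ((B.filter fun b => a * b ∈ popularP A B).card : ℝ)

/-- The pairs of `A × B` whose product is not popular. -/
noncomputable def unpopularPairs {F : Type*} [Field F] [DecidableEq F] (A B : Finset F) :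
    Finset (F × F) :=
  (A ×ˢ B).filter fun p => p.1 * p.2 ∉ popularP A B

lemma card_unpopular_le {F : Type*} [Field F] [DecidableEq F]
    (A B : Finset F) (hA : A.Nonempty) (hB : B.Nonempty) (hA3 : 3 ≤ A.card) :
    ((unpopularPairs A B).card : ℝ) ≤ A.card * B.card / Real.log A.card := by
  have hL : 0 < Real.log A.card := Real.log_pos (by exact_mod_cast (by omega : 1 < A.card))
  have hAB : (0 : ℝ) < (A * B).card := by exact_mod_cast (hA.mul hB).card_pos
  set c : ℝ := (A.card : ℝ) * B.card / (Real.log A.card * (A * B).card) with hc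
  have hc0 : 0 ≤ c := by positivity
  have hmaps : ∀ p ∈ unpopularPairs A B, p.1 * p.2 ∈ A * B := by
    intro p hp
    have hp' := Finset.mem_product.1 (Finset.mem_filter.1 hp).1
    exact Finset.mul_mem_mul hp'.1 hp'.2
  have hfib : ∀ x ∈ A * B,
      (((unpopularPairs A B).filter fun p => p.1 * p.2 = x).card : ℝ) ≤ c := by
    intro x hx
    by_cases hP : x ∈ popularP A B
    · have : ((unpopularPairs A B).filter fun p => p.1 * p.2 = x) = ∅ := by
        refine Finset.filter_eq_empty_iff.2 fun p hp h => ?_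
        exact (Finset.mem_filter.1 hp).2 (h ▸ hP)
      rw [this]
      simpa using hc0
    · have hlt : (prodRep A B x : ℝ) < c := by
        by_contra! h
        exact hP (Finset.mem_filter.2 ⟨hx, h⟩)
      refine le_trans ?_ hlt.le
      have hsub : ((unpopularPairs A B).filter fun p => p.1 * p.2 = x) ⊆
          (A ×ˢ B).filter fun p => p.1 * p.2 = x :=
        Finset.filter_subset_filter _ (Finset.filter_subset _ _)
      exact_mod_cast Finset.card_le_card hsub
  rw [Finset.card_eq_sum_card_fiberwise hmaps, Nat.cast_sum]
  refine (Finset.sum_le_card_nsmul _ _ c hfib).trans (le_of_eq ?_)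
  rw [nsmul_eq_mul, hc]
  field_simp

lemma card_compl_mul_le {F : Type*} [Field F] [DecidableEq F] (A B : Finset F) :
    ((A \ popularSub A B).card : ℝ) * (B.card / 3) ≤ (unpopularPairs A B).card := by
  have hcount : (unpopularPairs A B).card =
      ∑ a ∈ A, (B.filter fun b => a * b ∉ popularP A B).card := by
    simp only [unpopularPairs, Finset.card_filter, Finset.sum_product]
  have hbad : ∀ a ∈ A \ popularSub A B,
      (B.card : ℝ) / 3 ≤ ((B.filter fun b => a * b ∉ popularP A B).card : ℝ) := by
    intro a ha
    obtain ⟨haA, haP⟩ := Finset.mem_sdiff.1 ha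
    have hlt : ((B.filter fun b => a * b ∈ popularP A B).card : ℝ) < 2 / 3 * B.card := by
      by_contra! h
      exact haP (Finset.mem_filter.2 ⟨haA, h⟩)
    have hsplit : ((B.filter fun b => a * b ∈ popularP A B).card : ℝ) +
        (B.filter fun b => a * b ∉ popularP A B).card = B.card := by
      exact_mod_cast Finset.card_filter_add_card_filter_not (s := B)
        (fun b => a * b ∈ popularP A B)
    linarith
  rw [hcount, Nat.cast_sum, ← nsmul_eq_mul]
  refine (Finset.card_nsmul_le_sum _ _ _ hbad).trans ?_
  exact Finset.sum_le_sum_of_subset_of_nonneg Finset.sdiff_subset fun _ _ _ => Nat.cast_nonneg _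

/-- The popular subset `A'` is large: `|A'| ≥ (1 − 3/log|A|)|A|`. -/
theorem popular_subset_lower_bound {F : Type*} [Field F] [DecidableEq F]
    (A B : Finset F) (hA : A.Nonempty) (hB : B.Nonempty) (hA3 : 3 ≤ A.card) :
    ((1 : ℝ) - 3 / Real.log A.card) * A.card ≤ ((popularSub A B).card : ℝ) := by
  have hBpos : (0 : ℝ) < B.card := by exact_mod_cast hB.card_pos
  have hle := (card_compl_mul_le A B).trans (card_unpopular_le A B hA hB hA3)
  have hsplit : ((A \ popularSub A B).card : ℝ) + (popularSub A B).card = A.card := by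
    exact_mod_cast Finset.card_sdiff_add_card_eq_card
      (Finset.filter_subset _ _ : popularSub A B ⊆ A)
  have hcompl : ((A \ popularSub A B).card : ℝ) ≤ 3 / Real.log A.card * A.card := by
    refine le_of_mul_le_mul_right (hle.trans (le_of_eq ?_)) (by positivity : (0 : ℝ) < B.card / 3)
    ring
  linarith
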